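/- Suppose y* ∈ C¹_rd(𝕋;ℝⁿ) is a weak local minimizer of the sigma-form functional 𝓛σ[y] = ∫_a^b L(t, y(σ(t)), y^Δ(t)) Δt with the left endpoint free: there is δ > 0 such that 𝓛σ[y*] ≤ 𝓛σ[y] for every y ∈ C¹_rd(𝕋;ℝⁿ) with y(b) = y*(b) and ‖y − y*‖_{1,∞} < δ (no condition at t = a). Then the transversality condition L_v(a, y*(σ(a)), y*^Δ(a)) = 0 holds. -/

import Mathlib

open Set Filter

noncomputable section

-- Forward jump operator of the set `S`.
open Classical in
def tsSigma (S : Set ℝ) (t : ℝ) : ℝ :=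
  if ({s | s ∈ S ∧ t < s}).Nonempty then sInf {s | s ∈ S ∧ t < s} else t

-- Backward jump operator of the set `S`.
open Classical in
def tsRho (S : Set ℝ) (t : ℝ) : ℝ :=
  if ({s | s ∈ S ∧ s < t}).Nonempty then sSup {s | s ∈ S ∧ s < t} else t

/-- Graininess function. -/
def tsMu (S : Set ℝ) (t : ℝ) : ℝ := tsSigma S t - t

/-- `S^k = S \ (ρ(max S), max S]`. -/
def tsTk (S : Set ℝ) : Set ℝ := S \ Set.Ioc (tsRho S (sSup S)) (sSup S)

/-- Delta differentiability at `t` of `f` regarded as a function on the time scale `S`,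
with delta derivative `d`. -/
def deltaDiffAt {E : Type*} [NormedAddCommGroup E] [NormedSpace ℝ E]
    (S : Set ℝ) (f : ℝ → E) (t : ℝ) (d : E) : Prop :=
  ∀ ε > 0, ∃ δ > 0, ∀ s ∈ S ∩ Set.Ioo (t - δ) (t + δ),
    ‖f (tsSigma S t) - f s - (tsSigma S t - s) • d‖ ≤ ε * |tsSigma S t - s|

/-- rd-continuity of `f` on its domain `S`: continuity (within `S`) at right-dense points and
existence of a finite left-sided limit along `S` at left-dense points. -/
def RdContinuousOn {E : Type*} [NormedAddCommGroup E]
    (S : Set ℝ) (f : ℝ → E) : Prop :=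
  ∀ t ∈ S, (tsSigma S t = t → ContinuousWithinAt f S t) ∧
    (tsRho S t = t → ∃ l : E, Filter.Tendsto f (nhdsWithin t (S ∩ Set.Iio t)) (nhds l))

/-- `y ∈ C¹_rd(T)`, with delta derivative `yd`. -/
def C1rd {E : Type*} [NormedAddCommGroup E] [NormedSpace ℝ E]
    (T : Set ℝ) (y yd : ℝ → E) : Prop :=
  (∀ t ∈ tsTk T, deltaDiffAt T y t (yd t)) ∧ RdContinuousOn (tsTk T) yd

/-- `F` is a delta antiderivative of `f` on the time scale `S`; the delta integral
`∫_c^d f Δt` is `F d - F c` for any such `F`. -/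
def IsDeltaAntideriv {E : Type*} [NormedAddCommGroup E] [NormedSpace ℝ E]
    (S : Set ℝ) (f F : ℝ → E) : Prop :=
  ∀ t ∈ tsTk S, deltaDiffAt S F t (f t)

/-- Sup norm of `f` over the set `S`. -/
def tsSupNorm {E : Type*} [NormedAddCommGroup E] (S : Set ℝ) (f : ℝ → E) : ℝ :=
  sSup ((fun t => ‖f t‖) '' S)

abbrev En (n : ℕ) : Type := EuclideanSpace ℝ (Fin n)

/-!
If `Lv a (y (σ a)) (y^Δ a) w > 0`, perturb `y` by a small multiple of `η w`, where `η` is the delta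
antiderivative of `-(c - t)⁺` vanishing at a point `c` of `T` slightly to the right of `σ a`. Then
`η` vanishes from `c` on, so the value at `b` is kept, while for `t < c` the delta derivative of `η`
is negative and dominates: `0 ≤ η (σ t) ≤ (c - σ t)² ≤ (c - σ a) (c - t)`. Hence the linear gain
from `Lv` beats the change of state, and the perturbation lowers the integrand at every `t < c`
without any integration by parts. The same `c` serves right-scattered `a` (take `c = σ a`) and
right-dense `a`.
-/

open MeasureTheory Asymptotics
open scoped Topology

section JumpOperators

variable {S : Set ℝ} {s t : ℝ}

lemma le_tsSigma (S : Set ℝ) (t : ℝ) : t ≤ tsSigma S t := by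
  unfold tsSigma
  split_ifs with hne
  · exact le_csInf hne fun s hs => hs.2.le
  · rfl

lemma tsSigma_le (hs : s ∈ S) (hts : t < s) : tsSigma S t ≤ s := by
  rw [tsSigma, if_pos ⟨s, hs, hts⟩]
  exact csInf_le ⟨t, fun u hu => hu.2.le⟩ ⟨hs, hts⟩

lemma tsSigma_le_tsSigma (ht : t ∈ S) (hst : s ≤ t) : tsSigma S s ≤ tsSigma S t := by
  rcases hst.eq_or_lt with rfl | hst
  · rfl
  · exact (tsSigma_le ht hst).trans (le_tsSigma S t)

lemma tsSigma_mem (hS : IsClosed S) (ht : t ∈ S) : tsSigma S t ∈ S := by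
  unfold tsSigma
  split_ifs with hne
  · exact closure_minimal (fun s hs => hs.1) hS (csInf_mem_closure hne ⟨t, fun s hs => hs.2.le⟩)
  · exact ht

lemma lt_tsSigma_of_ne (hσ : tsSigma S t ≠ t) : t < tsSigma S t :=
  (le_tsSigma S t).lt_of_ne' hσ

lemma exists_mem_Ioo_of_tsSigma_eq (hσ : tsSigma S t = t) (hs : s ∈ S) (hts : t < s) {v : ℝ}
    (hv : t < v) : ∃ u ∈ S, u ∈ Ioo t v := by
  have hne : {u | u ∈ S ∧ t < u}.Nonempty := ⟨s, hs, hts⟩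
  rw [tsSigma, if_pos hne] at hσ
  obtain ⟨u, ⟨huS, htu⟩, huv⟩ := exists_lt_of_csInf_lt hne (hσ.trans_lt hv)
  exact ⟨u, huS, htu, huv⟩

lemma tsRho_le (S : Set ℝ) (t : ℝ) : tsRho S t ≤ t := by
  unfold tsRho
  split_ifs with hne
  · exact csSup_le hne fun s hs => hs.2.le
  · rfl

lemma le_tsRho (hs : s ∈ S) (hst : s < t) : s ≤ tsRho S t := by
  rw [tsRho, if_pos ⟨s, hs, hst⟩]
  exact le_csSup ⟨t, fun u hu => hu.2.le⟩ ⟨hs, hst⟩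

lemma nhdsWithin_inter_Ioi_eq_bot (hσ : tsSigma S t ≠ t) : 𝓝[S ∩ Ioi t] t = ⊥ := by
  refine empty_mem_iff_bot.1 ?_
  filter_upwards [self_mem_nhdsWithin, mem_nhdsWithin_of_mem_nhds (Iio_mem_nhds
    (lt_tsSigma_of_ne hσ))] with s hs hsσ
  exact (tsSigma_le hs.1 hs.2).not_gt hsσ

lemma nhdsWithin_inter_Iio_eq_bot (hρ : tsRho S t ≠ t) : 𝓝[S ∩ Iio t] t = ⊥ := by
  refine empty_mem_iff_bot.1 ?_
  filter_upwards [self_mem_nhdsWithin, mem_nhdsWithin_of_mem_nhds (Ioi_mem_nhds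
    ((tsRho_le S t).lt_of_ne hρ))] with s hs hsρ
  exact (le_tsRho hs.1 hs.2).not_gt hsρ

lemma nhdsWithin_eq_sup_Iio (hσ : tsSigma S t ≠ t) (ht : t ∈ S) :
    𝓝[S] t = pure t ⊔ 𝓝[S ∩ Iio t] t := by
  have hS : S = insert t (S ∩ Iio t ∪ S ∩ Ioi t) := by
    rw [← inter_union_distrib_left, Iio_union_Ioi, ← sdiff_eq, insert_sdiff_singleton,
      insert_eq_of_mem ht]
  conv_lhs => rw [hS]
  rw [nhdsWithin_insert, nhdsWithin_union, nhdsWithin_inter_Ioi_eq_bot hσ, sup_bot_eq]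

lemma countable_setOf_tsSigma_ne (S : Set ℝ) : {t | t ∈ S ∧ tsSigma S t ≠ t}.Countable := by
  refine (countable_setOfPred_isolated_right_within (s := S)).mono fun t ht => ?_
  exact ⟨ht.1, nhdsWithin_inter_Ioi_eq_bot ht.2⟩

lemma tendsto_tsSigma_nhdsWithin (hS : IsClosed S) (hσ : tsSigma S t = t) :
    Tendsto (tsSigma S) (𝓝[S] t) (𝓝[S] t) := by
  refine tendsto_nhdsWithin_iff.2 ⟨tendsto_order.2 ⟨fun l hl => ?_, fun v hv => ?_⟩,
    eventually_mem_nhdsWithin.mono fun s hs => tsSigma_mem hS hs⟩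
  · filter_upwards [mem_nhdsWithin_of_mem_nhds (Ioi_mem_nhds hl)] with s hs
    exact hs.trans_le (le_tsSigma S s)
  · by_cases hlast : ∀ s ∈ S, s ≤ t
    · filter_upwards [self_mem_nhdsWithin] with s hs
      exact (hlast _ (tsSigma_mem hS hs)).trans_lt hv
    · push Not at hlast
      obtain ⟨s, hs, hts⟩ := hlast
      obtain ⟨u, huS, htu, huv⟩ := exists_mem_Ioo_of_tsSigma_eq hσ hs hts hv
      filter_upwards [mem_nhdsWithin_of_mem_nhds (Iio_mem_nhds htu)] with s hsu
      exact (tsSigma_le huS hsu).trans_lt huv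

lemma tendsto_tsSigma_nhdsWithin_inter_Iio (hS : IsClosed S) (ht : t ∈ S) :
    Tendsto (tsSigma S) (𝓝[S ∩ Iio t] t) (𝓝[S] t) := by
  refine tendsto_nhdsWithin_iff.2
    ⟨?_, eventually_mem_nhdsWithin.mono fun s hs => tsSigma_mem hS hs.1⟩
  have hid : Tendsto id (𝓝[S ∩ Iio t] t) (𝓝 t) := tendsto_id.mono_left nhdsWithin_le_nhds
  refine hid.squeeze' tendsto_const_nhds (Eventually.of_forall (le_tsSigma S)) ?_
  filter_upwards [self_mem_nhdsWithin] with s hs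
  exact tsSigma_le ht hs.2

lemma exists_forall_lt_of_eventually_nhdsWithin {a b v : ℝ} {P : ℝ → Prop} (hS : IsClosed S)
    (ha : IsLeast S a) (hb : b ∈ S) (hab : a < b) (hv : tsSigma S a < v)
    (hP : ∀ᶠ t in 𝓝[S] a, P t) : ∃ c ∈ S, a < c ∧ c < v ∧ ∀ t ∈ S, t < c → P t := by
  by_cases hσ : tsSigma S a = a
  · obtain ⟨l, u, ⟨hla, hau⟩, hu⟩ :=
      mem_nhds_iff_exists_Ioo_subset.1 (eventually_nhdsWithin_iff.1 hP)
    obtain ⟨c, hcS, hac, hc⟩ := exists_mem_Ioo_of_tsSigma_eq hσ hb hab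
      (lt_min hau (hσ.symm.trans_lt hv))
    exact ⟨c, hcS, hac, hc.trans_le (min_le_right _ _), fun t ht htc =>
      hu ⟨hla.trans_le (ha.2 ht), htc.trans (hc.trans_le (min_le_left _ _))⟩ ht⟩
  · refine ⟨tsSigma S a, tsSigma_mem hS ha.1, lt_tsSigma_of_ne hσ, hv, fun t ht htσ => ?_⟩
    have hta : t = a := (ha.2 ht).eq_of_not_lt' fun hat => (tsSigma_le ht hat).not_gt htσ
    exact hta ▸ hP.self_of_nhdsWithin ha.1

end JumpOperators

section TsTk

variable {T : Set ℝ} {b t : ℝ}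

lemma tsTk_subset (T : Set ℝ) : tsTk T ⊆ T := sdiff_subset

lemma mem_tsTk_of_lt (hb : IsGreatest T b) (ht : t ∈ T) (htb : t < b) : t ∈ tsTk T := by
  refine ⟨ht, fun h => h.1.not_ge (le_tsRho ht ?_)⟩
  rwa [hb.csSup_eq]

lemma tsTk_eq_self (hb : IsGreatest T b) (hρ : tsRho T b = b) : tsTk T = T := by
  rw [tsTk, hb.csSup_eq, hρ, Ioc_self, sdiff_empty]

lemma tsTk_eq_inter_Iio (hb : IsGreatest T b) (hρ : tsRho T b ≠ b) : tsTk T = T ∩ Iio b := by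
  refine Subset.antisymm (fun t ht => ⟨ht.1, (hb.2 ht.1).lt_of_ne ?_⟩)
    fun t ht => mem_tsTk_of_lt hb ht.1 ht.2
  rintro rfl
  exact ht.2 (by rw [hb.csSup_eq]; exact ⟨(tsRho_le T t).lt_of_ne hρ, le_rfl⟩)

lemma tsSigma_tsTk_eq_self (hb : IsGreatest T b) (htb : t < b)
    (hσ : tsSigma T t = t) : tsSigma (tsTk T) t = t := by
  refine (le_of_forall_gt fun v hv => ?_).antisymm (le_tsSigma _ t)
  obtain ⟨s, hs, hts, hsv⟩ := exists_mem_Ioo_of_tsSigma_eq hσ hb.1 htb (lt_min hv htb)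
  have hsTk := mem_tsTk_of_lt hb hs (hsv.trans_le (min_le_right v b))
  exact (tsSigma_le hsTk hts).trans_lt (hsv.trans_le (min_le_left v b))

lemma nhdsWithin_eq_pure_of_isGreatest (hb : IsGreatest T b) (hρ : tsRho T b ≠ b) :
    𝓝[T] b = pure b := by
  have hT : T ⊆ insert b (T ∩ Iio b) := fun s hs =>
    (hb.2 hs).eq_or_lt.imp id fun hsb => ⟨hs, hsb⟩
  refine le_antisymm ((nhdsWithin_mono b hT).trans ?_) (pure_le_nhdsWithin hb.1)
  rw [nhdsWithin_insert, nhdsWithin_inter_Iio_eq_bot hρ, sup_bot_eq]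

end TsTk

namespace RdContinuousOn

variable {E F : Type*} [NormedAddCommGroup E] [NormedAddCommGroup F] {S T : Set ℝ}
  {f : ℝ → E} {g : ℝ → F} {a b t : ℝ}

lemma exists_tendsto_left (hf : RdContinuousOn S f) (ht : t ∈ S) :
    ∃ l, Tendsto f (𝓝[S ∩ Iio t] t) (𝓝 l) := by
  by_cases hρ : tsRho S t = t
  · exact (hf t ht).2 hρ
  · exact ⟨0, by simp only [nhdsWithin_inter_Iio_eq_bot hρ, tendsto_bot]⟩

lemma of_continuousOn (hf : ContinuousOn f S) : RdContinuousOn S f := fun t ht =>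
  ⟨fun _ => hf t ht, fun _ => ⟨f t, (hf t ht).mono inter_subset_left⟩⟩

lemma prodMk (hf : RdContinuousOn S f) (hg : RdContinuousOn S g) :
    RdContinuousOn S fun t => (f t, g t) := by
  refine fun t ht => ⟨fun hσ => ((hf t ht).1 hσ).prodMk ((hg t ht).1 hσ), fun hρ => ?_⟩
  obtain ⟨l, hl⟩ := (hf t ht).2 hρ
  obtain ⟨m, hm⟩ := (hg t ht).2 hρ
  exact ⟨(l, m), hl.prodMk_nhds hm⟩

lemma comp_continuousOn {Φ : ℝ × E → F} (hΦ : ContinuousOn Φ (S ×ˢ univ))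
    (hf : RdContinuousOn S f) : RdContinuousOn S fun t => Φ (t, f t) := by
  have hcomp : ∀ {t : ℝ} {R : Set ℝ} {l : E}, t ∈ S → R ⊆ S → Tendsto f (𝓝[R] t) (𝓝 l) →
      Tendsto (fun s => Φ (s, f s)) (𝓝[R] t) (𝓝 (Φ (t, l))) := by
    intro t R l ht hRS hl
    have hid : Tendsto (fun s : ℝ => s) (𝓝[R] t) (𝓝 t) := tendsto_id.mono_left nhdsWithin_le_nhds
    refine (hΦ (t, l) ⟨ht, mem_univ l⟩).tendsto.comp
      (tendsto_nhdsWithin_iff.2 ⟨hid.prodMk_nhds hl, ?_⟩)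
    exact eventually_mem_nhdsWithin.mono fun s hs => ⟨hRS hs, mem_univ _⟩
  refine fun t ht => ⟨fun hσ => hcomp ht Subset.rfl ((hf t ht).1 hσ), fun hρ => ?_⟩
  obtain ⟨l, hl⟩ := (hf t ht).2 hρ
  exact ⟨Φ (t, l), hcomp ht inter_subset_left hl⟩

lemma add {g : ℝ → E} (hf : RdContinuousOn S f) (hg : RdContinuousOn S g) :
    RdContinuousOn S fun t => f t + g t :=
  comp_continuousOn (Φ := fun p : ℝ × E × E => p.2.1 + p.2.2)
    (Continuous.continuousOn (by fun_prop)) (hf.prodMk hg)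

lemma comp_tsSigma (hS : IsClosed S) (hf : ContinuousOn f S) :
    RdContinuousOn S fun t => f (tsSigma S t) := by
  refine fun t ht => ⟨fun hσ => ?_, fun _ => ⟨f t, ?_⟩⟩
  · rw [ContinuousWithinAt, hσ]
    exact (hf t ht).tendsto.comp (tendsto_tsSigma_nhdsWithin hS hσ)
  · exact (hf t ht).tendsto.comp (tendsto_tsSigma_nhdsWithin_inter_Iio hS ht)

lemma of_tsTk (hb : IsGreatest T b) (hf : RdContinuousOn (tsTk T) f) : RdContinuousOn T f := by
  by_cases hρ : tsRho T b = b
  · rwa [tsTk_eq_self hb hρ] at hf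
  have hTk := tsTk_eq_inter_Iio hb hρ
  refine fun t ht => ?_
  rcases (hb.2 ht).lt_or_eq with htb | rfl
  · have htTk := mem_tsTk_of_lt hb ht htb
    have hnhds : 𝓝[tsTk T] t = 𝓝[T] t :=
      hTk ▸ nhdsWithin_inter_of_mem' (mem_nhdsWithin_of_mem_nhds (Iio_mem_nhds htb))
    have hleft : tsTk T ∩ Iio t = T ∩ Iio t := by
      rw [hTk, inter_assoc, Iio_inter_Iio, min_eq_right htb.le]
    refine ⟨fun hσ => ?_, fun _ => hleft ▸ hf.exists_tendsto_left htTk⟩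
    have := (hf t htTk).1 (tsSigma_tsTk_eq_self hb htb hσ)
    rwa [ContinuousWithinAt, hnhds] at this
  · refine ⟨fun _ => ?_, fun h => absurd h hρ⟩
    rw [ContinuousWithinAt, nhdsWithin_eq_pure_of_isGreatest hb hρ]
    exact tendsto_pure_nhds f t

lemma continuousWithinAt_of_isLeast (hf : RdContinuousOn S f) (ha : IsLeast S a) :
    ContinuousWithinAt f S a := by
  by_cases hσ : tsSigma S a = a
  · exact (hf a ha.1).1 hσ
  · have hempty : S ∩ Iio a = ∅ := eq_empty_of_forall_notMem fun s hs => (ha.2 hs.1).not_gt hs.2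
    rw [ContinuousWithinAt, nhdsWithin_eq_sup_Iio hσ ha.1, hempty, nhdsWithin_empty, sup_bot_eq]
    exact tendsto_pure_nhds f a

lemma isBoundedUnder_norm (hf : RdContinuousOn S f) (ht : t ∈ S) :
    (𝓝[S] t).IsBoundedUnder (· ≤ ·) (‖f ·‖) := by
  by_cases hσ : tsSigma S t = t
  · exact ((hf t ht).1 hσ).norm.isBoundedUnder_le
  · obtain ⟨l, hl⟩ := hf.exists_tendsto_left ht
    obtain ⟨M, hM⟩ := hl.norm.isBoundedUnder_le
    refine ⟨max ‖f t‖ M, eventually_map.2 ?_⟩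
    rw [nhdsWithin_eq_sup_Iio hσ ht, eventually_sup, eventually_pure]
    exact ⟨le_max_left _ _, (eventually_map.1 hM).mono fun s hs => hs.trans (le_max_right _ _)⟩

lemma exists_norm_le (hS : IsCompact S) (hf : RdContinuousOn S f) :
    ∃ M, ∀ t ∈ S, ‖f t‖ ≤ M := by
  refine hS.induction_on (p := fun R => ∃ M, ∀ t ∈ R, ‖f t‖ ≤ M) ⟨0, by simp⟩ ?_ ?_ fun t ht => ?_
  · rintro R R' hR ⟨M, hM⟩
    exact ⟨M, fun t ht => hM t (hR ht)⟩
  · rintro R R' ⟨M, hM⟩ ⟨M', hM'⟩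
    refine ⟨max M M', fun t ht => ht.elim (fun h => ?_) fun h => ?_⟩
    · exact (hM t h).trans (le_max_left _ _)
    · exact (hM' t h).trans (le_max_right _ _)
  · obtain ⟨M, hM⟩ := hf.isBoundedUnder_norm ht
    exact ⟨{s | ‖f s‖ ≤ M}, eventually_map.1 hM, M, fun s hs => hs⟩

lemma stronglyMeasurable_domRestrict (hf : RdContinuousOn S f) :
    StronglyMeasurable (S.domRestrict f) := by
  have hcount : {t : S | tsSigma S t ≠ t}.Countable :=
    ((countable_setOf_tsSigma_ne S).preimage Subtype.val_injective).mono fun t ht => by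
      exact ⟨t.2, ht⟩
  have := hcount.to_subtype
  refine stronglyMeasurable_of_restrict_of_restrict_compl hcount.measurableSet .of_discrete
    (Continuous.stronglyMeasurable (continuous_iff_continuousAt.2 fun t => ?_))
  have hft : ContinuousAt (S.domRestrict f) t :=
    (continuousWithinAt_iff_continuousAt_domRestrict _ t.1.2).1 ((hf t t.1.2).1 (not_not.1 t.2))
  exact hft.comp continuousAt_subtype_val

end RdContinuousOn

section DeltaDerivative

variable {E F : Type*} [NormedAddCommGroup E] [NormedSpace ℝ E] [NormedAddCommGroup F]
  [NormedSpace ℝ F] {S : Set ℝ} {f g : ℝ → E} {t : ℝ} {d e : E}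

lemma deltaDiffAt_iff_isLittleO : deltaDiffAt S f t d ↔
    (fun s => f (tsSigma S t) - f s - (tsSigma S t - s) • d) =o[𝓝[S] t]
      fun s => tsSigma S t - s := by
  rw [isLittleO_iff]
  refine forall₂_congr fun ε _ => ?_
  rw [(nhdsWithin_hasBasis (nhds_basis_Ioo_pos t) S).eventually_iff]
  simp only [inter_comm S, Real.norm_eq_abs]

lemma deltaDiffAt.continuousWithinAt (hf : deltaDiffAt S f t d) (ht : t ∈ S) :
    ContinuousWithinAt f S t := by
  set r : ℝ → E := fun s => f (tsSigma S t) - f s - (tsSigma S t - s) • d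
  have hden : ContinuousWithinAt (fun s => tsSigma S t - s) S t := by fun_prop
  have hr : Tendsto r (𝓝[S] t) (𝓝 0) := (isLittleO_one_iff ℝ).1
    ((deltaDiffAt_iff_isLittleO.1 hf).trans_isBigO (hden.tendsto.isBigO_one ℝ))
  have hrt : r t = 0 := tendsto_nhds_unique (tendsto_pure_nhds r t)
    (hr.mono_left (pure_le_nhdsWithin ht))
  have hrc : ContinuousWithinAt r S t := by rwa [ContinuousWithinAt, hrt]
  have hfr : f = fun s => f (tsSigma S t) - (tsSigma S t - s) • d - r s := by
    ext s
    simp only [r]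
    abel
  rw [hfr]
  fun_prop

lemma deltaDiffAt.add (hf : deltaDiffAt S f t d) (hg : deltaDiffAt S g t e) :
    deltaDiffAt S (fun s => f s + g s) t (d + e) := by
  rw [deltaDiffAt_iff_isLittleO] at hf hg ⊢
  refine (hf.add hg).congr_left fun s => ?_
  rw [smul_add]
  abel

lemma deltaDiffAt.clm_apply (A : E →L[ℝ] F) (hf : deltaDiffAt S f t d) :
    deltaDiffAt S (fun s => A (f s)) t (A d) := by
  rw [deltaDiffAt_iff_isLittleO] at hf ⊢
  simpa only [map_sub, map_smul] using (A.isBigO_comp _ _).trans_isLittleO hf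

lemma deltaDiffAt_of_continuousWithinAt (hf : ContinuousWithinAt f S t)
    (hσ : tsSigma S t ≠ t) (hd : f (tsSigma S t) - f t = (tsSigma S t - t) • d) :
    deltaDiffAt S f t d := by
  have hnum : ContinuousWithinAt (fun s => f (tsSigma S t) - f s - (tsSigma S t - s) • d) S t := by
    fun_prop
  rw [ContinuousWithinAt, hd, sub_self, ← isLittleO_one_iff ℝ] at hnum
  have hden : ContinuousWithinAt (fun s => tsSigma S t - s) S t := by fun_prop
  have hpos : 0 < ‖tsSigma S t - t‖ := norm_pos_iff.2 (sub_ne_zero.2 hσ)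
  refine deltaDiffAt_iff_isLittleO.2 (hnum.trans_isBigO ?_)
  exact (isBigO_const_left_iff_pos_le_norm one_ne_zero).2
    ⟨_, half_pos hpos, hden.norm.eventually_const_le (half_lt_self hpos)⟩

end DeltaDerivative

namespace C1rd

variable {E F : Type*} [NormedAddCommGroup E] [NormedSpace ℝ E] [NormedAddCommGroup F]
  [NormedSpace ℝ F] {T : Set ℝ} {y yd z zd : ℝ → E} {b : ℝ}

lemma continuousOn (hb : IsGreatest T b) (hy : C1rd T y yd) : ContinuousOn y T := by
  intro t ht
  by_cases htTk : t ∈ tsTk T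
  · exact (hy.1 t htTk).continuousWithinAt ht
  obtain rfl : t = b := (hb.2 ht).eq_of_not_lt fun htb => htTk (mem_tsTk_of_lt hb ht htb)
  have hρ : tsRho T t ≠ t := fun hρ => htTk ((tsTk_eq_self hb hρ).symm ▸ ht)
  rw [ContinuousWithinAt, nhdsWithin_eq_pure_of_isGreatest hb hρ]
  exact tendsto_pure_nhds y t

lemma add (hy : C1rd T y yd) (hz : C1rd T z zd) :
    C1rd T (fun t => y t + z t) (fun t => yd t + zd t) :=
  ⟨fun t ht => (hy.1 t ht).add (hz.1 t ht), hy.2.add hz.2⟩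

lemma clm_apply (A : E →L[ℝ] F) (hy : C1rd T y yd) :
    C1rd T (fun t => A (y t)) (fun t => A (yd t)) :=
  ⟨fun t ht => (hy.1 t ht).clm_apply A,
    hy.2.comp_continuousOn (A.continuous.comp continuous_snd).continuousOn⟩

end C1rd

lemma tsSupNorm_le {E : Type*} [NormedAddCommGroup E] {S : Set ℝ} {f : ℝ → E} {C : ℝ}
    (hC : 0 ≤ C) (hf : ∀ t ∈ S, ‖f t‖ ≤ C) : tsSupNorm S f ≤ C :=
  Real.sSup_le (forall_mem_image.2 hf) hC

section DeltaIntegral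

/-- The largest point of the closed set `T` not exceeding `x`; meaningful when `T` has points in
`Iic x`. -/
def tsFloor (T : Set ℝ) (x : ℝ) : ℝ := sSup (T ∩ Iic x)

variable {E : Type*} [NormedAddCommGroup E] {T : Set ℝ} {f : ℝ → E} {c s t x : ℝ}

lemma le_tsFloor (hs : s ∈ T) (hsx : s ≤ x) : s ≤ tsFloor T x :=
  le_csSup ⟨x, fun _ hu => hu.2⟩ ⟨hs, hsx⟩

lemma tsFloor_mem_inter_Iic (hT : IsClosed T) (hs : s ∈ T) (hsx : s ≤ x) :
    tsFloor T x ∈ T ∩ Iic x :=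
  (hT.inter isClosed_Iic).csSup_mem ⟨s, hs, hsx⟩ ⟨x, fun _ hu => hu.2⟩

lemma tsFloor_eq_of_mem_Ico (ht : t ∈ T) (hx : x ∈ Ico t (tsSigma T t)) : tsFloor T x = t := by
  refine IsGreatest.csSup_eq ⟨⟨ht, hx.1⟩, fun s hs => ?_⟩
  exact not_lt.1 fun hts => ((tsSigma_le hs.1 hts).trans hs.2).not_gt hx.2

lemma monotoneOn_tsFloor (hT : IsClosed T) (hs : s ∈ T) : MonotoneOn (tsFloor T) (Ici s) :=
  fun _ hx _ _ hxy =>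
    have ⟨hmem, hle⟩ := tsFloor_mem_inter_Iic hT hs hx
    le_tsFloor hmem (hle.trans hxy)

lemma tsFloor_mem_inter_uIcc (hT : IsClosed T) (hs : s ∈ T) (ht : t ∈ T) (hx : x ∈ uIoc s t) :
    tsFloor T x ∈ T ∩ uIcc s t := by
  have hmin : min s t ∈ T := min_rec' (· ∈ T) hs ht
  obtain ⟨hmem, hle⟩ := tsFloor_mem_inter_Iic hT hmin hx.1.le
  exact ⟨hmem, le_tsFloor hmin hx.1.le, hle.trans hx.2⟩

lemma RdContinuousOn.intervalIntegrable_comp_tsFloor (hf : RdContinuousOn T f) (hT : IsCompact T)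
    (hs : s ∈ T) (ht : t ∈ T) : IntervalIntegrable (fun x => f (tsFloor T x)) volume s t := by
  have hfloor := fun x (hx : x ∈ uIoc s t) => (tsFloor_mem_inter_uIcc hT.isClosed hs ht hx).1
  have hmin : min s t ∈ T := min_rec' (· ∈ T) hs ht
  have hmeas : AEMeasurable (tsFloor T) (volume.restrict (uIoc s t)) :=
    aemeasurable_restrict_of_monotoneOn measurableSet_uIoc
      ((monotoneOn_tsFloor hT.isClosed hmin).mono fun x hx => hx.1.le)
  have hext : StronglyMeasurable (Function.extend Subtype.val (T.domRestrict f) 0) :=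
    (MeasurableEmbedding.subtype_coe hT.measurableSet).stronglyMeasurable_extend
      hf.stronglyMeasurable_domRestrict stronglyMeasurable_zero
  have hcongr : ∀ x ∈ uIoc s t,
      Function.extend Subtype.val (T.domRestrict f) 0 (tsFloor T x) = f (tsFloor T x) :=
    fun x hx => Subtype.val_injective.extend_apply _ _ (⟨_, hfloor x hx⟩ : T)
  obtain ⟨M, hM⟩ := hf.exists_norm_le hT
  rw [intervalIntegrable_iff]
  refine .of_bound (by simp) (C := M) ?_
    ((ae_restrict_iff' measurableSet_uIoc).2 (.of_forall fun x hx => hM _ (hfloor x hx)))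
  exact (hext.aestronglyMeasurable.comp_aemeasurable hmeas).congr
    ((ae_restrict_iff' measurableSet_uIoc).2 (.of_forall hcongr))

variable [NormedSpace ℝ E]

/-- The delta integral of `f` from `s` to `t`, as the Lebesgue integral of the step extension
`f ∘ tsFloor T` of `f`, which is constant on the gaps of `T`. -/
def deltaIntegral (T : Set ℝ) (f : ℝ → E) (s t : ℝ) : E := ∫ x in s..t, f (tsFloor T x)

lemma deltaIntegral_sub_left (hf : RdContinuousOn T f) (hT : IsCompact T) (hc : c ∈ T)
    (hs : s ∈ T) (ht : t ∈ T) :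
    deltaIntegral T f c t - deltaIntegral T f c s = deltaIntegral T f s t :=
  intervalIntegral.integral_interval_sub_left (hf.intervalIntegrable_comp_tsFloor hT hc ht)
    (hf.intervalIntegrable_comp_tsFloor hT hc hs)

lemma deltaIntegral_tsSigma [CompleteSpace E] (ht : t ∈ T) :
    deltaIntegral T f t (tsSigma T t) = (tsSigma T t - t) • f t := by
  rw [deltaIntegral, ← intervalIntegral.integral_const]
  refine intervalIntegral.integral_congr_Ioo_of_le (le_tsSigma T t) fun x hx => ?_
  simp only [tsFloor_eq_of_mem_Ico ht ⟨hx.1.le, hx.2⟩]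

lemma norm_deltaIntegral_sub_smul_le [CompleteSpace E] (hf : RdContinuousOn T f)
    (hT : IsCompact T) (hs : s ∈ T) (ht : t ∈ T) {v : E} {C : ℝ}
    (hC : ∀ u ∈ T ∩ uIcc s t, ‖f u - v‖ ≤ C) :
    ‖deltaIntegral T f s t - (t - s) • v‖ ≤ C * |t - s| := by
  rw [deltaIntegral, ← intervalIntegral.integral_const, ← intervalIntegral.integral_sub
    (hf.intervalIntegrable_comp_tsFloor hT hs ht) intervalIntegrable_const]
  exact intervalIntegral.norm_integral_le_of_norm_le_const fun x hx =>
    hC _ (tsFloor_mem_inter_uIcc hT.isClosed hs ht hx)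

lemma continuousOn_deltaIntegral (hf : RdContinuousOn T f) (hT : IsCompact T) (hc : c ∈ T) :
    ContinuousOn (deltaIntegral T f c) T := by
  have hne : T.Nonempty := ⟨c, hc⟩
  have hsub : T ⊆ uIcc (sInf T) (sSup T) := fun t ht =>
    Icc_subset_uIcc ⟨csInf_le hT.bddBelow ht, le_csSup hT.bddAbove ht⟩
  exact (intervalIntegral.continuousOn_primitive_interval' (hf.intervalIntegrable_comp_tsFloor hT
    (hT.sInf_mem hne) (hT.sSup_mem hne)) (hsub hc)).mono hsub

lemma deltaDiffAt_deltaIntegral [CompleteSpace E] (hf : RdContinuousOn T f) (hT : IsCompact T)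
    (hc : c ∈ T) (ht : t ∈ T) : deltaDiffAt T (deltaIntegral T f c) t (f t) := by
  by_cases hσ : tsSigma T t = t
  · intro ε hε
    obtain ⟨δ, hδ, hfδ⟩ := Metric.continuousWithinAt_iff.1 ((hf t ht).1 hσ) ε hε
    refine ⟨δ, hδ, fun s ⟨hs, hst⟩ => ?_⟩
    rw [hσ, deltaIntegral_sub_left hf hT hc hs ht]
    refine norm_deltaIntegral_sub_smul_le hf hT hs ht fun u ⟨hu, hust⟩ => ?_
    rw [← dist_eq_norm]
    refine (hfδ hu ?_).le
    rw [← Real.ball_eq_Ioo] at hst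
    exact (Real.dist_right_le_of_mem_uIcc hust).trans_lt hst
  · refine deltaDiffAt_of_continuousWithinAt (continuousOn_deltaIntegral hf hT hc t ht) hσ ?_
    rw [deltaIntegral_sub_left hf hT hc ht (tsSigma_mem hT.isClosed ht), deltaIntegral_tsSigma ht]

lemma deltaIntegral_lt {f g : ℝ → ℝ} {a b c : ℝ} (hT : IsCompact T) (hf : RdContinuousOn T f)
    (hg : RdContinuousOn T g) (ha : a ∈ T) (hb : b ∈ T) (hac : a < c) (hcb : c ≤ b)
    (hle : ∀ t ∈ T, f t ≤ g t) (hlt : ∀ t ∈ T, t < c → f t < g t) :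
    deltaIntegral T f a b < deltaIntegral T g a b := by
  have hfloor := fun x (hx : x ∈ Ioc a b) => tsFloor_mem_inter_Iic hT.isClosed ha hx.1.le
  refine intervalIntegral.integral_lt_integral_of_ae_le_of_measure_setOfPred_lt_ne_zero
    (hac.le.trans hcb) (hf.intervalIntegrable_comp_tsFloor hT ha hb)
    (hg.intervalIntegrable_comp_tsFloor hT ha hb)
    ((ae_restrict_iff' measurableSet_Ioc).2 (.of_forall fun x hx => hle _ (hfloor x hx).1)) ?_
  have hsub : Ioo a c ⊆ {x | f (tsFloor T x) < g (tsFloor T x)} ∩ Ioc a b := fun x hx =>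
    have hxab : x ∈ Ioc a b := ⟨hx.1, hx.2.le.trans hcb⟩
    ⟨hlt _ (hfloor x hxab).1 ((hfloor x hxab).2.trans_lt hx.2), hxab⟩
  have hpos : 0 < volume (Ioo a c) := by simpa only [Real.volume_Ioo, ENNReal.ofReal_pos, sub_pos]
  exact (hpos.trans_le ((measure_mono hsub).trans (Measure.le_restrict_apply _ _))).ne'

end DeltaIntegral

section Variation

lemma exists_variation {T : Set ℝ} {c : ℝ} (hT : IsCompact T) (hc : c ∈ T) :
    ∃ η : ℝ → ℝ, ∀ t ∈ T, deltaDiffAt T η t (-max (c - t) 0) ∧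
      η t ∈ Icc 0 (max (c - t) 0 ^ 2) := by
  set g : ℝ → ℝ := fun t => -max (c - t) 0
  have hg : RdContinuousOn T g := .of_continuousOn (by fun_prop)
  refine ⟨deltaIntegral T g c, fun t ht => ⟨deltaDiffAt_deltaIntegral hg hT hc ht, ?_⟩⟩
  set h : ℝ := max (c - t) 0
  have hbound : ∀ u ∈ T ∩ uIcc c t, ‖g u - -(h / 2)‖ ≤ h / 2 := by
    rintro u ⟨-, hu⟩
    have huh : max (c - u) 0 ≤ h := max_le (by grind [mem_uIcc]) (le_max_right _ _)
    rw [Real.norm_eq_abs, abs_le]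
    constructor <;> linarith [le_max_right (c - u) 0]
  have hη := norm_deltaIntegral_sub_smul_le hg hT hc ht hbound
  have hmul : (t - c) * -(h / 2) = h ^ 2 / 2 := by grind
  have habs : h / 2 * |t - c| = h ^ 2 / 2 := by
    rcases le_total c t with hct | htc
    · simp [h, hct]
    · rw [abs_of_nonpos (sub_nonpos.2 htc)]
      linarith
  rw [smul_eq_mul, hmul, habs, Real.norm_eq_abs, abs_le] at hη
  constructor <;> linarith

lemma exists_small_variation {T : Set ℝ} {a c ε ρ : ℝ} (hT : IsCompact T) (ha : IsLeast T a)
    (hc : c ∈ T) (hac : a < c) (hcε : c < tsSigma T a + ε) (hρ : 0 < ρ) :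
    ∃ η ζ : ℝ → ℝ, C1rd T η (fun t => -ζ t) ∧ (∀ t ∈ T, |η t| ≤ ρ ∧ |ζ t| ≤ ρ) ∧
      (∀ t ∈ T, t < c → 0 < ζ t ∧ 0 ≤ η (tsSigma T t) ∧ η (tsSigma T t) ≤ ε * ζ t) ∧
      ∀ t ∈ T, c ≤ t → η t = 0 ∧ ζ t = 0 := by
  obtain ⟨η, hη⟩ := exists_variation hT hc
  obtain ⟨κ, hκ, hκρ⟩ := exists_pos_mul_lt hρ (max ((c - a) ^ 2) (c - a))
  have hη₁ : C1rd T η fun t => -max (c - t) 0 :=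
    ⟨fun t ht => (hη t (tsTk_subset T ht)).1, .of_continuousOn (by fun_prop)⟩
  refine ⟨fun t => κ * η t, fun t => κ * max (c - t) 0, ?_, fun t ht => ?_, fun t ht htc => ?_,
    fun t ht hct => ?_⟩
  · simpa using hη₁.clm_apply (κ • .id ℝ ℝ)
  · have hmax : max (c - t) 0 ≤ c - a := max_le (by linarith [ha.2 ht]) (by linarith)
    have hηt := (hη t ht).2
    beta_reduce
    rw [abs_of_nonneg (mul_nonneg hκ.le hηt.1), abs_of_nonneg (by positivity), mul_comm κ,
      mul_comm κ]
    have hscale {r : ℝ} (hr : r ≤ max ((c - a) ^ 2) (c - a)) : r * κ ≤ ρ :=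
      (mul_le_mul_of_nonneg_right hr hκ.le).trans hκρ.le
    have hsq : max (c - t) 0 ^ 2 ≤ (c - a) ^ 2 := pow_le_pow_left₀ (le_max_right _ _) hmax 2
    exact ⟨hscale (hηt.2.trans (hsq.trans (le_max_left _ _))),
      hscale (hmax.trans (le_max_right _ _))⟩
  · have hσc : tsSigma T t ≤ c := tsSigma_le hc htc
    have hσa : tsSigma T a ≤ tsSigma T t := tsSigma_le_tsSigma ht (ha.2 ht)
    obtain ⟨hη0, hηle⟩ := (hη _ (tsSigma_mem hT.isClosed ht)).2
    have hησ : η (tsSigma T t) ≤ ε * (c - t) := by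
      rw [max_eq_left (sub_nonneg.2 hσc), sq] at hηle
      exact hηle.trans (mul_le_mul (by linarith) (by linarith [le_tsSigma T t])
        (sub_nonneg.2 hσc) (by linarith))
    beta_reduce
    rw [max_eq_left (sub_pos.2 htc).le, mul_left_comm]
    exact ⟨mul_pos hκ (sub_pos.2 htc), mul_nonneg hκ.le hη0, by gcongr⟩
  · have hzero : max (c - t) 0 = 0 := max_eq_right (sub_nonpos.2 hct)
    have hηt := (hη t ht).2
    rw [hzero, zero_pow two_ne_zero, Icc_self, mem_singleton_iff] at hηt
    simp only [hηt, hzero, mul_zero, and_self]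

end Variation

section Descent

variable {E : Type*} [NormedAddCommGroup E] [NormedSpace ℝ E] {T : Set ℝ}

lemma sub_le_mul_of_hasFDerivAt_apply_le {φ : E → ℝ} {φ' : E → E →L[ℝ] ℝ} {x w : E} {C τ : ℝ}
    (hφ : ∀ z, HasFDerivAt φ (φ' z) z) (hτ : 0 ≤ τ) (hC : ∀ θ ∈ Icc 0 τ, φ' (x + θ • w) w ≤ C) :
    φ (x + τ • w) - φ x ≤ C * τ := by
  have hline (θ : ℝ) : HasDerivAt (fun θ : ℝ => φ (x + θ • w)) (φ' (x + θ • w) w) θ :=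
    (hφ _).comp_hasDerivAt θ (by simpa using ((hasDerivAt_id' θ).smul_const w).const_add x)
  have hdiff : Differentiable ℝ fun θ : ℝ => φ (x + θ • w) := fun θ => (hline θ).differentiableAt
  have hmvt := (convex_Icc 0 τ).image_sub_le_mul_sub_of_deriv_le hdiff.continuous.continuousOn
    hdiff.differentiableOn (fun θ hθ => (hline θ).deriv.trans_le (hC θ (interior_subset hθ)))
    0 (left_mem_Icc.2 hτ) τ (right_mem_Icc.2 hτ) hτ
  simpa only [zero_smul, add_zero, sub_zero] using hmvt

lemma exists_eventually_forall_lt {Φ : ℝ × E × E → ℝ} {z₀ : ℝ × E × E} {C : ℝ}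
    (hΦ : ContinuousWithinAt Φ (T ×ˢ univ) z₀) (hC : Φ z₀ < C) (w : E) :
    ∃ ε > 0, ∀ᶠ z in 𝓝[T ×ˢ univ] z₀, ∀ α β : ℝ, |α| ≤ ε → |β| ≤ ε →
      Φ (z.1, z.2.1 + α • w, z.2.2 + β • w) < C := by
  let shift : (ℝ × E × E) × ℝ × ℝ → ℝ × E × E := fun q =>
    (q.1.1, q.1.2.1 + q.2.1 • w, q.1.2.2 + q.2.2 • w)
  have hshift : Tendsto shift (𝓝[T ×ˢ univ] z₀ ×ˢ 𝓝 0) (𝓝[T ×ˢ univ] z₀) := by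
    refine tendsto_nhdsWithin_iff.2 ⟨?_, ?_⟩
    · have hcont : Continuous shift := by fun_prop
      have hz₀ : shift (z₀, 0) = z₀ := by simp [shift]
      have := hcont.tendsto (z₀, 0)
      rw [hz₀, nhds_prod_eq] at this
      exact this.mono_left (prod_mono_left _ nhdsWithin_le_nhds)
    · filter_upwards [tendsto_fst self_mem_nhdsWithin] with q hq using ⟨hq.1, mem_univ _⟩
  obtain ⟨P, hP, Q, hQ, hPQ⟩ :=
    eventually_prod_iff.1 ((hΦ.tendsto.comp hshift).eventually_lt_const hC)
  obtain ⟨r, hr, hrQ⟩ := Metric.eventually_nhds_iff.1 hQ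
  refine ⟨r / 2, half_pos hr, hP.mono fun z hz α β hα hβ => hPQ hz (y := (α, β)) (hrQ ?_)⟩
  rw [dist_zero_right, Prod.norm_def]
  exact (max_le hα hβ).trans_lt (half_lt_self hr)

/-- `Ly` and `Lv` are the partial Fréchet derivatives of the Lagrangian `L` in its state and
velocity arguments, and are jointly continuous on `T`. -/
structure HasContinuousPartialsOn (T : Set ℝ) (L : ℝ → E → E → ℝ)
    (Ly Lv : ℝ → E → E → E →L[ℝ] ℝ) : Prop where
  hasFDerivAt_state : ∀ t ∈ T, ∀ y v, HasFDerivAt (fun z => L t z v) (Ly t y v) y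
  hasFDerivAt_velocity : ∀ t ∈ T, ∀ y v, HasFDerivAt (fun z => L t y z) (Lv t y v) v
  continuousOn_state :
    ContinuousOn (fun z : ℝ × E × E => Ly z.1 z.2.1 z.2.2) (T ×ˢ univ)
  continuousOn_velocity :
    ContinuousOn (fun z : ℝ × E × E => Lv z.1 z.2.1 z.2.2) (T ×ˢ univ)

lemma HasContinuousPartialsOn.exists_descent {L : ℝ → E → E → ℝ}
    {Ly Lv : ℝ → E → E → E →L[ℝ] ℝ} {a : ℝ} {p q w : E}
    (hL : HasContinuousPartialsOn T L Ly Lv) (ha : a ∈ T) (hw : 0 < Lv a p q w) :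
    ∃ ε > 0, ∀ᶠ z in 𝓝[T ×ˢ univ] (a, p, q), ∀ α β : ℝ, 0 ≤ α → α ≤ ε * β → 0 < β → β ≤ ε →
      L z.1 (z.2.1 + α • w) (z.2.2 - β • w) < L z.1 z.2.1 z.2.2 := by
  have hmem : (a, p, q) ∈ T ×ˢ (univ : Set (E × E)) := ⟨ha, mem_univ _⟩
  set m : ℝ := Lv a p q w / 2
  set M : ℝ := |Ly a p q w| + 1
  have hm : 0 < m := half_pos hw
  have hM : 0 < M := by positivity
  obtain ⟨ε₁, hε₁, hy⟩ := exists_eventually_forall_lt (C := M)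
    ((hL.continuousOn_state _ hmem).clm_apply continuousWithinAt_const)
    ((le_abs_self _).trans_lt (lt_add_one _)) w
  obtain ⟨ε₂, hε₂, hv⟩ := exists_eventually_forall_lt (C := -m)
    ((hL.continuousOn_velocity _ hmem).clm_apply continuousWithinAt_const).neg
    (neg_lt_neg (half_lt_self hw)) w
  obtain ⟨ε, hε, hεle⟩ : ∃ ε > 0, ε ≤ min (min ε₁ ε₂) (min 1 (m / (2 * M))) :=
    ⟨_, by positivity, le_rfl⟩
  simp only [le_min_iff] at hεle
  obtain ⟨⟨hεy, hεv⟩, hε1, hεM⟩ := hεle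
  refine ⟨ε, hε, ?_⟩
  filter_upwards [hy, hv, self_mem_nhdsWithin] with z hzy hzv hz α β hα hαβ hβ hβε
  have hαε : α ≤ ε := hαβ.trans (mul_le_of_le_one_right hε.le (hβε.trans hε1))
  have hstate : L z.1 (z.2.1 + α • w) (z.2.2 - β • w) - L z.1 z.2.1 (z.2.2 - β • w) ≤ M * α := by
    refine sub_le_mul_of_hasFDerivAt_apply_le (fun y => hL.hasFDerivAt_state z.1 hz.1 y _) hα
      fun θ hθ => ?_
    have := hzy θ (-β) (by grind) (by grind)
    rw [neg_smul, ← sub_eq_add_neg] at this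
    exact this.le
  have hvelocity : L z.1 z.2.1 (z.2.2 - β • w) - L z.1 z.2.1 z.2.2 ≤ -m * β := by
    rw [sub_eq_add_neg z.2.2, ← smul_neg]
    refine sub_le_mul_of_hasFDerivAt_apply_le (hL.hasFDerivAt_velocity z.1 hz.1 z.2.1) hβ.le
      fun θ hθ => ?_
    have := hzv 0 (-θ) (by grind) (by grind)
    rw [zero_smul, add_zero, neg_smul, ← smul_neg] at this
    rw [map_neg]
    exact this.le
  have hαM : M * α ≤ m / 2 * β := by
    calc M * α ≤ M * (m / (2 * M) * β) := by gcongr; exact hαβ.trans (by gcongr)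
      _ = m / 2 * β := by field_simp
  linarith [mul_pos hm hβ]

end Descent

section Transversality

variable {E : Type*} [NormedAddCommGroup E] [NormedSpace ℝ E] {T : Set ℝ} {a b : ℝ}
  {L : ℝ → E → E → ℝ} {Ly Lv : ℝ → E → E → E →L[ℝ] ℝ} {ys yds : ℝ → E}

/-- `ys`, with delta derivative `yds`, is a weak local minimizer of the delta integral of
`L t (y (σ t)) (y^Δ t)` over `T`, which runs from `a` to `b`, among the `C1rd` functions with the
same value at `b`. As in `IsDeltaAntideriv`, the integral is the increment of any antiderivative. -/
def IsWeakLocalMinLeftFree (T : Set ℝ) (a b : ℝ) (L : ℝ → E → E → ℝ) (ys yds : ℝ → E) : Prop :=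
  ∃ δ > 0, ∀ y yd : ℝ → E, C1rd T y yd → y b = ys b →
    tsSupNorm (tsTk T) (fun t => y t - ys t) + tsSupNorm (tsTk T) (fun t => yd t - yds t) < δ →
    ∀ F G : ℝ → ℝ, IsDeltaAntideriv T (fun t => L t (ys (tsSigma T t)) (yds t)) F →
      IsDeltaAntideriv T (fun t => L t (y (tsSigma T t)) (yd t)) G → F b - F a ≤ G b - G a

lemma C1rd.prodMk_comp_tsSigma {y yd : ℝ → E} (hT : IsClosed T) (hb : IsGreatest T b)
    (hy : C1rd T y yd) : RdContinuousOn T fun t => (y (tsSigma T t), yd t) :=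
  (RdContinuousOn.comp_tsSigma hT (hy.continuousOn hb)).prodMk (.of_tsTk hb hy.2)

lemma HasContinuousPartialsOn.exists_descent_along (hL : HasContinuousPartialsOn T L Ly Lv)
    (hT : IsClosed T) (ha : IsLeast T a) (hb : IsGreatest T b) (hab : a < b) (hys : C1rd T ys yds)
    {w : E} (hw : 0 < Lv a (ys (tsSigma T a)) (yds a) w) :
    ∃ ε > 0, ∃ c ∈ T, a < c ∧ c < tsSigma T a + ε ∧ ∀ t ∈ T, t < c → ∀ α β : ℝ,
      0 ≤ α → α ≤ ε * β → 0 < β → β ≤ ε →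
      L t (ys (tsSigma T t) + α • w) (yds t - β • w) < L t (ys (tsSigma T t)) (yds t) := by
  obtain ⟨ε, hε, hdescent⟩ := hL.exists_descent ha.1 hw
  have hcurve : Tendsto (fun t => (t, ys (tsSigma T t), yds t)) (𝓝[T] a)
      (𝓝[T ×ˢ univ] (a, ys (tsSigma T a), yds a)) := by
    refine tendsto_nhdsWithin_iff.2
      ⟨?_, eventually_mem_nhdsWithin.mono fun t ht => ⟨ht, mem_univ _⟩⟩
    exact continuousWithinAt_id.prodMk
      ((hys.prodMk_comp_tsSigma hT hb).continuousWithinAt_of_isLeast ha)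
  exact ⟨ε, hε, exists_forall_lt_of_eventually_nhdsWithin hT ha hb.1 hab
    (lt_add_of_pos_right _ hε) (hcurve.eventually hdescent)⟩

lemma HasContinuousPartialsOn.exists_competitor (hL : HasContinuousPartialsOn T L Ly Lv)
    (hT : IsClosed T) (ha : IsLeast T a) (hb : IsGreatest T b) (hab : a < b)
    (hys : C1rd T ys yds) {w : E} (hw : 0 < Lv a (ys (tsSigma T a)) (yds a) w) {δ : ℝ}
    (hδ : 0 < δ) :
    ∃ y yd, C1rd T y yd ∧ y b = ys b ∧
      tsSupNorm (tsTk T) (fun t => y t - ys t) + tsSupNorm (tsTk T) (fun t => yd t - yds t) < δ ∧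
      ∃ c ∈ T, a < c ∧ ∀ t ∈ T,
        (t < c → L t (y (tsSigma T t)) (yd t) < L t (ys (tsSigma T t)) (yds t)) ∧
        (c ≤ t → L t (y (tsSigma T t)) (yd t) = L t (ys (tsSigma T t)) (yds t)) := by
  obtain ⟨ε, hε, c, hc, hac, hcε, hdescent⟩ := hL.exists_descent_along hT ha hb hab hys hw
  obtain ⟨ρ, hρ, hρδ⟩ := exists_pos_mul_lt hδ (2 * ‖w‖)
  have hTc : IsCompact T := isCompact_Icc.of_isClosed_subset hT fun t ht => ⟨ha.2 ht, hb.2 ht⟩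
  obtain ⟨η, ζ, hη, hbound, hbefore, hafter⟩ :=
    exists_small_variation hTc ha hc hac hcε (lt_min hρ hε)
  refine ⟨fun t => ys t + η t • w, fun t => yds t + -ζ t • w,
    hys.add (hη.clm_apply (.toSpanSingleton ℝ w)), ?_, ?_, c, hc, hac, fun t ht =>
      ⟨fun htc => ?_, fun hct => ?_⟩⟩
  · simp only [(hafter b hb.1 (hb.2 hc)).1, zero_smul, add_zero]
  · have hsmul {θ : ℝ} (hθ : |θ| ≤ min ρ ε) : ‖θ • w‖ ≤ ρ * ‖w‖ := by
      rw [norm_smul]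
      gcongr
      exact hθ.trans (min_le_left _ _)
    have hstate := tsSupNorm_le (S := tsTk T) (C := ρ * ‖w‖)
      (f := fun t => ys t + η t • w - ys t) (by positivity) fun t ht => by
        simpa only [add_sub_cancel_left] using hsmul (hbound t (tsTk_subset T ht)).1
    have hvelocity := tsSupNorm_le (S := tsTk T) (C := ρ * ‖w‖)
      (f := fun t => yds t + -ζ t • w - yds t) (by positivity) fun t ht => by
        simpa only [add_sub_cancel_left, neg_smul, norm_neg] using
          hsmul (hbound t (tsTk_subset T ht)).2
    linarith
  · obtain ⟨hζ, hη0, hηζ⟩ := hbefore t ht htc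
    have hζε : ζ t ≤ ε := (le_abs_self _).trans ((hbound t ht).2.trans (min_le_right _ _))
    simpa only [neg_smul, ← sub_eq_add_neg] using hdescent t ht htc _ _ hη0 hηζ hζ hζε
  · have hησ := (hafter _ (tsSigma_mem hT ht) (hct.trans (le_tsSigma T t))).1
    simp only [hησ, (hafter t ht hct).2, neg_zero, zero_smul, add_zero]

theorem transversality_sigma_form_left_endpoint_free_general (hT : IsClosed T)
    (ha : IsLeast T a) (hb : IsGreatest T b) (hab : a < b)
    (hLc : ContinuousOn (fun z : ℝ × E × E => L z.1 z.2.1 z.2.2) (T ×ˢ univ))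
    (hL : HasContinuousPartialsOn T L Ly Lv) (hys : C1rd T ys yds)
    (hmin : IsWeakLocalMinLeftFree T a b L ys yds) :
    Lv a (ys (tsSigma T a)) (yds a) = 0 := by
  by_contra hne
  obtain ⟨w, hw⟩ : ∃ w, 0 < Lv a (ys (tsSigma T a)) (yds a) w := by
    obtain ⟨w, hw⟩ := ContinuousLinearMap.exists_ne_zero hne
    rcases hw.lt_or_gt with hneg | hpos
    · exact ⟨-w, by rwa [map_neg, neg_pos]⟩
    · exact ⟨w, hpos⟩
  obtain ⟨δ, hδ, hmin⟩ := hmin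
  obtain ⟨y, yd, hy, hyb, hyδ, c, hc, hac, hcompare⟩ :=
    hL.exists_competitor hT ha hb hab hys hw hδ
  have hTc : IsCompact T := isCompact_Icc.of_isClosed_subset hT fun t ht => ⟨ha.2 ht, hb.2 ht⟩
  have hintegrand {z zd : ℝ → E} (hz : C1rd T z zd) :
      RdContinuousOn T fun t => L t (z (tsSigma T t)) (zd t) :=
    (hz.prodMk_comp_tsSigma hT hb).comp_continuousOn hLc
  have hantideriv {f : ℝ → ℝ} (hf : RdContinuousOn T f) :
      IsDeltaAntideriv T f (deltaIntegral T f a) := fun t ht =>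
    deltaDiffAt_deltaIntegral hf hTc ha.1 (tsTk_subset T ht)
  have hlt := deltaIntegral_lt hTc (hintegrand hy) (hintegrand hys) ha.1 hb.1 hac (hb.2 hc)
    (fun t ht => (lt_or_ge t c).elim (fun h => ((hcompare t ht).1 h).le)
      fun h => ((hcompare t ht).2 h).le) fun t ht => (hcompare t ht).1
  have hle := hmin y yd hy hyb hyδ _ _ (hantideriv (hintegrand hys)) (hantideriv (hintegrand hy))
  simp only [deltaIntegral, intervalIntegral.integral_same, sub_zero] at hle hlt
  exact hle.not_gt hlt

end Transversality

theorem transversality_sigma_form_left_endpoint_free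
    {n : ℕ} (hn : 1 ≤ n)
    (T₀ : Set ℝ) (hT₀closed : IsClosed T₀)
    (a b : ℝ) (ha : a ∈ T₀) (hb : b ∈ T₀) (hab : a < b)
    (T : Set ℝ) (hT : T = Icc a b ∩ T₀)
    (hT3 : ∃ c ∈ T, c ≠ a ∧ c ≠ b)
    (L : ℝ → En n → En n → ℝ) (Ly Lv : ℝ → En n → En n → En n)
    (hLc : ContinuousOn (fun p : ℝ × En n × En n => L p.1 p.2.1 p.2.2)
      (T ×ˢ (univ : Set (En n × En n))))
    (hLC2 : ∀ t ∈ T, ContDiff ℝ 2 (fun p : En n × En n => L t p.1 p.2))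
    (hLy : ∀ t ∈ T, ∀ y v : En n, HasGradientAt (fun z => L t z v) (Ly t y v) y)
    (hLv : ∀ t ∈ T, ∀ y v : En n, HasGradientAt (fun z => L t y z) (Lv t y v) v)
    (hLyc : ContinuousOn (fun p : ℝ × En n × En n => Ly p.1 p.2.1 p.2.2)
      (T ×ˢ (univ : Set (En n × En n))))
    (hLvc : ContinuousOn (fun p : ℝ × En n × En n => Lv p.1 p.2.1 p.2.2)
      (T ×ˢ (univ : Set (En n × En n))))
    (ys yds : ℝ → En n) (hys : C1rd T ys yds)
    (hmin : ∃ δ > 0, ∀ y yd : ℝ → En n, C1rd T y yd →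
      y b = ys b →
      tsSupNorm (tsTk T) (fun t => y t - ys t)
        + tsSupNorm (tsTk T) (fun t => yd t - yds t) < δ →
      ∀ F G : ℝ → ℝ,
        IsDeltaAntideriv T (fun t => L t (ys (tsSigma T t)) (yds t)) F →
        IsDeltaAntideriv T (fun t => L t (y (tsSigma T t)) (yd t)) G →
        F b - F a ≤ G b - G a) :
    Lv a (ys (tsSigma T a)) (yds a) = 0 := by
  subst hT
  let toDual := InnerProductSpace.toDual ℝ (En n)
  have hpartials : HasContinuousPartialsOn (Icc a b ∩ T₀) L (fun t y v => toDual (Ly t y v))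
      (fun t y v => toDual (Lv t y v)) :=
    ⟨hLy, hLv, toDual.continuous.comp_continuousOn hLyc, toDual.continuous.comp_continuousOn hLvc⟩
  exact toDual.map_eq_zero_iff.1 (transversality_sigma_form_left_endpoint_free_general
    (isClosed_Icc.inter hT₀closed) ⟨⟨left_mem_Icc.2 hab.le, ha⟩, fun t ht => ht.1.1⟩
    ⟨⟨right_mem_Icc.2 hab.le, hb⟩, fun t ht => ht.1.2⟩ hab hLc hpartials hys hmin)
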